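/- Let φ: ℕ → ℝ⁺ be non-decreasing with φ(n) → ∞. If Σ_{n≥1} n/(φ(n)² (log φ(n))²) = ∞, then the set E'(φ) = {x ∈ [0,1) : there exist 1 ≤ k ≠ l ≤ n with a'_k(x) ≥ φ(n) and a'_l(x) ≥ φ(n) for infinitely many n} has full Lebesgue measure 1. -/

import Mathlib

open Filter MeasureTheory Set

/-- The Gauss map `T(x) = {1/x}` (with `T(0) = 0`). -/
noncomputable def gaussMap (x : ℝ) : ℝ := Int.fract x⁻¹

/-- `cfA x n` is the `n`-th partial quotient `aₙ(x)` of the continued fraction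
expansion of `x` (for `n ≥ 1`): `aₙ(x) = ⌊1 / T^{n-1}(x)⌋`. -/
noncomputable def cfA (x : ℝ) (n : ℕ) : ℕ := ⌊(gaussMap^[n - 1] x)⁻¹⌋₊

/-- `cfA' x n = aₙ'(x)`: equal to `aₙ(x)` if `aₙ(x)` is prime, and `0` otherwise. -/
noncomputable def cfA' (x : ℝ) (n : ℕ) : ℕ := if (cfA x n).Prime then cfA x n else 0

/-- The set `E'(φ)` of `x ∈ [0,1)` having, for infinitely many `n`, two distinct indices
`1 ≤ k ≠ l ≤ n` with prime partial quotients `aₖ'(x), aₗ'(x) ≥ φ(n)`. -/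
noncomputable def Eset (φ : ℕ → ℝ) : Set ℝ :=
  {x | x ∈ Set.Ico (0 : ℝ) 1 ∧
    {n : ℕ | ∃ k l : ℕ, 1 ≤ k ∧ k ≤ n ∧ 1 ≤ l ∧ l ≤ n ∧ k ≠ l ∧
      φ n ≤ (cfA' x k : ℝ) ∧ φ n ≤ (cfA' x l : ℝ)}.Infinite}


namespace CFProof

/-- The weighted measure with density `1/(1+θ y)^2` on `(0,1)`. -/
noncomputable def mu (θ : ℝ) : Measure ℝ :=
  (volume.restrict (Ioo (0:ℝ) 1)).withDensity (fun y => ENNReal.ofReal (1 / (1 + θ * y) ^ 2))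

/-- Inverse branch of the Gauss map. -/
noncomputable def br (a : ℕ) (y : ℝ) : ℝ := 1 / ((a : ℝ) + 1 + y)

lemma measurable_gauss : Measurable gaussMap := by
  unfold gaussMap
  exact measurable_fract.comp measurable_inv

lemma measurable_gauss_iter (m : ℕ) : Measurable (gaussMap^[m]) := measurable_gauss.iterate m

lemma measurable_cfA (k : ℕ) : Measurable (fun x => cfA x k) := by
  unfold cfA
  exact Nat.measurable_floor.comp (measurable_inv.comp (measurable_gauss_iter _))

lemma measurable_br (a : ℕ) : Measurable (br a) := by
  unfold br
  fun_prop

lemma gauss_br (a : ℕ) {y : ℝ} (hy : y ∈ Ioo (0:ℝ) 1) : gaussMap (br a y) = y := by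
  unfold gaussMap br
  rw [one_div, inv_inv, Int.fract_eq_iff]
  refine ⟨hy.1.le, hy.2, (a:ℤ) + 1, ?_⟩
  push_cast; ring

lemma cfA_br_one (a : ℕ) {y : ℝ} (hy : y ∈ Ioo (0:ℝ) 1) : cfA (br a y) 1 = a + 1 := by
  unfold cfA br
  simp only [Nat.sub_self, Function.iterate_zero, id]
  rw [one_div, inv_inv, Nat.floor_eq_iff (by have := hy.1; positivity)]
  push_cast
  constructor <;> linarith [hy.1, hy.2]

lemma cfA_succ (x : ℝ) (k m : ℕ) (hk : 1 ≤ k) : cfA x (k + m) = cfA (gaussMap^[m] x) k := by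
  unfold cfA
  rw [← Function.iterate_add_apply]
  congr 3
  omega

lemma br_mem (a : ℕ) {y : ℝ} (hy : y ∈ Ioo (0:ℝ) 1) : br a y ∈ Ioo (0:ℝ) 1 := by
  unfold br
  have := hy.1
  have ha : (0:ℝ) ≤ a := by positivity
  refine ⟨by positivity, ?_⟩
  rw [div_lt_one (by positivity)]
  linarith

lemma br_inj (a : ℕ) : InjOn (br a) (Ioo (0:ℝ) 1) := by
  intro x hx y hy h
  rw [← gauss_br a hx, h, gauss_br a hy]

lemma br_deriv (a : ℕ) {y : ℝ} (hy : y ∈ Ioo (0:ℝ) 1) :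
    HasDerivAt (br a) (-1 / ((a:ℝ) + 1 + y) ^ 2) y := by
  have h : ((a:ℝ) + 1 + y) ≠ 0 := by have := hy.1; positivity
  have := ((hasDerivAt_id' y).const_add ((a:ℝ)+1)).fun_inv h
  unfold br
  simp only [one_div]
  exact this

lemma mu_apply (θ : ℝ) {E : Set ℝ} (hE : MeasurableSet E) :
    mu θ E = ∫⁻ y in E ∩ Ioo (0:ℝ) 1, ENNReal.ofReal (1 / (1 + θ * y) ^ 2) := by
  rw [mu, withDensity_apply _ hE, Measure.restrict_restrict hE]

lemma Ioo_ae : Ioo (0:ℝ) 1 =ᵐ[volume] ⋃ a : ℕ, br a '' Ioo (0:ℝ) 1 := by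
  have hc : (⋃ a : ℕ, {(1:ℝ) / ((a:ℝ) + 1)}).Countable := by
    apply countable_iUnion; intro a; exact countable_singleton _
  have h0 := hc.ae_notMem volume
  filter_upwards [h0] with x hx
  apply propext
  constructor
  · intro hx1
    have hx1 : x ∈ Ioo (0:ℝ) 1 := hx1
    have h1 : 1 < x⁻¹ := (one_lt_inv₀ hx1.1).2 hx1.2
    have hf : 1 ≤ ⌊x⁻¹⌋₊ := Nat.le_floor (by exact_mod_cast h1.le)
    refine mem_iUnion.2 ⟨⌊x⁻¹⌋₊ - 1, x⁻¹ - ⌊x⁻¹⌋₊, ⟨?_, ?_⟩, ?_⟩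
    · have := Nat.floor_le (a := x⁻¹) (by linarith)
      rcases this.lt_or_eq with h | h
      · linarith
      · exfalso
        apply hx
        refine mem_iUnion.2 ⟨⌊x⁻¹⌋₊ - 1, ?_⟩
        rw [Nat.cast_sub hf, mem_singleton_iff]
        push_cast
        rw [sub_add_cancel, h]; simp
    · have := Nat.lt_floor_add_one (x⁻¹)
      linarith
    · unfold br
      rw [Nat.cast_sub hf]
      push_cast
      rw [sub_add_cancel, add_sub_cancel]; simp
  · intro h
    obtain ⟨a, y, hy, rfl⟩ := mem_iUnion.1 h
    exact br_mem a hy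

lemma image_meas (a : ℕ) {E : Set ℝ} (hE : MeasurableSet E) :
    MeasurableSet (br a '' (E ∩ Ioo (0:ℝ) 1)) :=
  (hE.inter measurableSet_Ioo).image_of_measurable_injOn (measurable_br a)
    ((br_inj a).mono inter_subset_right)

/-- Decomposition of the measure by the first digit. -/
lemma mu_decomp {θ : ℝ} (hθ : 0 ≤ θ) {E : Set ℝ} (hE : MeasurableSet E) :
    mu θ E = ∑' a : ℕ, ENNReal.ofReal (1 / ((a:ℝ) + 1 + θ) ^ 2) *
      mu (1 / ((a:ℝ) + 1 + θ)) (br a ⁻¹' E) := by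
  have hset : (E ∩ Ioo (0:ℝ) 1 : Set ℝ) =ᵐ[volume]
      (⋃ a : ℕ, br a '' ((br a ⁻¹' E) ∩ Ioo (0:ℝ) 1) : Set ℝ) := by
    have h1 : (⋃ a : ℕ, br a '' ((br a ⁻¹' E) ∩ Ioo (0:ℝ) 1) : Set ℝ)
        = E ∩ ⋃ a : ℕ, br a '' Ioo (0:ℝ) 1 := by
      rw [inter_iUnion]
      congr 1
      ext1 a
      rw [inter_comm, image_inter_preimage, inter_comm]
    rw [h1]
    exact (ae_eq_refl E).inter Ioo_ae
  rw [mu_apply θ hE, setLIntegral_congr hset, lintegral_iUnion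
    (fun a => image_meas a (measurable_br a hE))]
  · congr 1
    ext1 a
    have hm : MeasurableSet ((br a ⁻¹' E) ∩ Ioo (0:ℝ) 1) :=
      (measurable_br a hE).inter measurableSet_Ioo
    rw [lintegral_image_eq_lintegral_abs_deriv_mul hm
      (fun y hy => (br_deriv a hy.2).hasDerivWithinAt) ((br_inj a).mono inter_subset_right),
      mu_apply _ (measurable_br a hE), ← lintegral_const_mul' _ _ ENNReal.ofReal_ne_top]
    apply setLIntegral_congr_fun hm
    intro y hy
    have hy0 : 0 < y := hy.2.1
    have ha : (0:ℝ) ≤ a := by positivity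
    simp only
    rw [← ENNReal.ofReal_mul (by positivity), ← ENNReal.ofReal_mul (by positivity), abs_div,
      abs_neg, abs_one, abs_of_pos (by positivity : 0 < ((a:ℝ) + 1 + y) ^ 2)]
    congr 1
    unfold br
    field_simp
    ring
  · intro a b hab
    refine Set.disjoint_left.2 ?_
    rintro x ⟨y, hy, rfl⟩ ⟨z, hz, h⟩
    have := cfA_br_one a hy.2
    rw [← h, cfA_br_one b hz.2] at this
    omega

/-- `A` depends only on the first `m` digits. -/
def Past (m : ℕ) (A : Set ℝ) : Prop :=
  MeasurableSet A ∧ ∀ x ∈ Ioo (0:ℝ) 1, ∀ y ∈ Ioo (0:ℝ) 1,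
    (∀ k, 1 ≤ k → k ≤ m → cfA x k = cfA y k) → x ∈ A → y ∈ A

lemma mu_compl (θ : ℝ) : mu θ (Ioo (0:ℝ) 1)ᶜ = 0 := by
  rw [mu_apply θ measurableSet_Ioo.compl]; simp

lemma mu_congr (θ : ℝ) {A B : Set ℝ} (h : ∀ x ∈ Ioo (0:ℝ) 1, x ∈ A ↔ x ∈ B) :
    mu θ A = mu θ B := by
  apply measure_congr
  have : ∀ᵐ x ∂(mu θ), x ∈ Ioo (0:ℝ) 1 := by
    rw [ae_iff]; exact mu_compl θ
  filter_upwards [this] with x hx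
  exact propext (h x hx)

lemma past_br {m : ℕ} {A : Set ℝ} (hA : Past (m + 1) A) (a : ℕ) : Past m (br a ⁻¹' A) := by
  refine ⟨measurable_br a hA.1, fun x hx y hy h hxA => ?_⟩
  refine hA.2 _ (br_mem a hx) _ (br_mem a hy) (fun k h1 hk => ?_) hxA
  rcases Nat.lt_or_ge 1 k with hk1 | hk1
  · obtain ⟨j, rfl⟩ : ∃ j, k = j + 1 := ⟨k - 1, by omega⟩
    rw [cfA_succ _ _ _ (by omega), cfA_succ _ _ _ (by omega), Function.iterate_one,
      gauss_br a hx, gauss_br a hy]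
    exact h j (by omega) (by omega)
  · obtain rfl : k = 1 := by omega
    rw [cfA_br_one a hx, cfA_br_one a hy]

lemma theta_mem (a : ℕ) {θ : ℝ} (hθ : θ ∈ Icc (0:ℝ) 1) :
    1 / ((a:ℝ) + 1 + θ) ∈ Icc (0:ℝ) 1 := by
  have := hθ.1
  have ha : (0:ℝ) ≤ a := by positivity
  refine ⟨by positivity, ?_⟩
  rw [div_le_one (by positivity)]
  linarith

/-- Quasi-independence of past and future. -/
lemma past_future {B : Set ℝ} (hB : MeasurableSet B) {r : ENNReal}
    (hr : ∀ θ ∈ Icc (0:ℝ) 1, mu θ B ≤ r * mu θ univ) (m : ℕ) :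
    ∀ {A : Set ℝ}, Past m A → ∀ θ ∈ Icc (0:ℝ) 1,
      mu θ (A ∩ gaussMap^[m] ⁻¹' B) ≤ r * mu θ A := by
  induction m with
  | zero =>
    intro A hA θ hθ
    simp only [Function.iterate_zero, preimage_id]
    by_cases h : ∃ x ∈ Ioo (0:ℝ) 1, x ∈ A
    · obtain ⟨x, hx, hxA⟩ := h
      have : mu θ A = mu θ univ := mu_congr θ fun y hy =>
        ⟨fun _ => trivial, fun _ => hA.2 x hx y hy (fun k h1 h2 => by omega) hxA⟩
      rw [this]
      exact (measure_mono inter_subset_right).trans (hr θ hθ)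
    · push Not at h
      have : mu θ (A ∩ B) = mu θ ∅ := mu_congr θ fun y hy => by simp [h y hy]
      rw [this]; simp
  | succ m ih =>
    intro A hA θ hθ
    rw [mu_decomp hθ.1 (hA.1.inter (measurable_gauss_iter _ hB)), mu_decomp hθ.1 hA.1,
      ← ENNReal.tsum_mul_left]
    refine ENNReal.tsum_le_tsum fun a => ?_
    rw [mul_left_comm]
    gcongr
    refine le_trans (le_of_eq ?_) (ih (past_br hA a) _ (theta_mem a hθ))
    apply mu_congr
    intro y hy
    simp only [mem_preimage, mem_inter_iff, Function.iterate_succ_apply, gauss_br a hy]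

lemma mu_le_one {θ : ℝ} (hθ : θ ∈ Icc (0:ℝ) 1) (E : Set ℝ) : mu θ E ≤ 1 := by
  refine (measure_mono (subset_univ E)).trans ?_
  rw [mu_apply θ MeasurableSet.univ, univ_inter]
  calc _ ≤ ∫⁻ y in Ioo (0:ℝ) 1, 1 := by
        apply setLIntegral_mono' measurableSet_Ioo
        intro y hy
        rw [ENNReal.ofReal_le_one, div_le_one (by have := hy.1; have := hθ.1; positivity)]
        have := mul_nonneg hθ.1 hy.1.le
        nlinarith
    _ = 1 := by simp

lemma mu_univ_ge {θ : ℝ} (hθ : θ ∈ Icc (0:ℝ) 1) : ENNReal.ofReal (1/4) ≤ mu θ univ := by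
  rw [mu_apply θ MeasurableSet.univ, univ_inter]
  calc ENNReal.ofReal (1/4) = ∫⁻ y in Ioo (0:ℝ) 1, ENNReal.ofReal (1/4) := by simp
    _ ≤ _ := by
        apply setLIntegral_mono' measurableSet_Ioo
        intro y hy
        apply ENNReal.ofReal_le_ofReal
        have := hy.1; have := hθ.1
        have h1 := mul_nonneg hθ.1 hy.1.le
        have h2 : θ * y ≤ 1 := by nlinarith [hθ.2, hy.2]
        apply one_div_le_one_div_of_le (by positivity)
        nlinarith

instance (θ : Icc (0:ℝ) 1) : IsFiniteMeasure (mu θ) :=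
  ⟨lt_of_le_of_lt (mu_le_one θ.2 _) ENNReal.one_lt_top⟩

lemma mu_zero : mu 0 = volume.restrict (Ioo (0:ℝ) 1) := by
  unfold mu; simp

lemma theta_gap {t : ℝ} (ht : 160000 ≤ t) :
    t / 2 ≤ Chebyshev.theta (4 * t) - Chebyshev.theta t := by
  have h1 := Chebyshev.theta_ge' (x := 4 * t) (by linarith)
  have h2 := Chebyshev.theta_le_log4_mul_x (x := t) (by linarith)
  obtain ⟨u, hu, rfl⟩ : ∃ u : ℝ, 20 ≤ u ∧ t = u ^ 4 := by
    refine ⟨√√t, ?_, ?_⟩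
    · apply Real.le_sqrt_of_sq_le
      apply Real.le_sqrt_of_sq_le
      norm_num; linarith
    · rw [show (√√t) ^ 4 = ((√√t) ^ 2) ^ 2 by ring, Real.sq_sqrt (by positivity),
        Real.sq_sqrt (by linarith)]
  have hsq : √(4 * u ^ 4) = 2 * u ^ 2 := by
    rw [show 4 * u ^ 4 = (2 * u ^ 2) ^ 2 by ring, Real.sqrt_sq (by positivity)]
  have hl4 : Real.log 4 = 2 * Real.log 2 := by
    rw [show (4:ℝ) = 2 ^ 2 by norm_num, Real.log_pow]; norm_num
  have ha := Real.log_two_gt_d9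
  have hb := Real.log_two_lt_d9
  have hlu : Real.log u ≤ u := by
    have := Real.log_le_sub_one_of_pos (by linarith : 0 < u)
    linarith
  have hl1 : Real.log (4 * u ^ 4) ≤ 1.4 + 4 * u := by
    rw [Real.log_mul (by norm_num) (by positivity), Real.log_pow, hl4]
    push_cast; linarith
  have hl2 : Real.log (4 * u ^ 4 + 2) ≤ 2.1 + 4 * u := by
    have : Real.log (4 * u ^ 4 + 2) ≤ Real.log (2 * (4 * u ^ 4)) := by
      apply Real.log_le_log (by positivity)
      linarith
    rw [Real.log_mul (by norm_num) (by positivity)] at this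
    linarith
  rw [hsq] at h1
  have h3 : 2 * (2 * u ^ 2) * Real.log (4 * u ^ 4) ≤ 2 * (2 * u ^ 2) * (1.4 + 4 * u) := by
    gcongr
  rw [hl4] at h2
  have h4 : 0.693 * u ^ 4 ≤ Real.log 2 * u ^ 4 := by gcongr; linarith
  have hu3 : 20 * u ^ 3 ≤ u ^ 4 := by nlinarith [pow_pos (by linarith : 0 < u) 3]
  have hu2 : 20 * u ^ 2 ≤ u ^ 3 := by nlinarith [pow_pos (by linarith : 0 < u) 2]
  have hu1 : 20 * u ≤ u ^ 2 := by nlinarith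
  linarith

lemma prime_sum {t : ℝ} (ht : 160000 ≤ t) :
    ∃ s : Finset ℕ, (∀ p ∈ s, p.Prime ∧ t ≤ (p:ℝ)) ∧
      1 / (64 * (t * Real.log t)) ≤ ∑ p ∈ s, 1 / (p:ℝ) ^ 2 := by
  have ht0 : 0 < t := by linarith
  have hlt : 0 < Real.log t := Real.log_pos (by linarith)
  refine ⟨(Finset.Ioc ⌊t⌋₊ ⌊4 * t⌋₊).filter Nat.Prime, ?_, ?_⟩
  · intro p hp
    simp only [Finset.mem_filter, Finset.mem_Ioc] at hp
    exact ⟨hp.2, ((Nat.floor_lt ht0.le).1 hp.1.1).le⟩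
  set s := (Finset.Ioc ⌊t⌋₊ ⌊4 * t⌋₊).filter Nat.Prime with hs
  have hle : ∀ p ∈ s, (p:ℝ) ≤ 4 * t ∧ 0 < (p:ℝ) := by
    intro p hp
    simp only [hs, Finset.mem_filter, Finset.mem_Ioc] at hp
    exact ⟨(Nat.le_floor_iff (by linarith)).1 hp.1.2, by exact_mod_cast hp.2.pos⟩
  have hgap : Chebyshev.theta (4 * t) - Chebyshev.theta t = ∑ p ∈ s, Real.log p := by
    unfold Chebyshev.theta
    rw [sub_eq_iff_eq_add, hs, Finset.sum_filter, Finset.sum_filter, Finset.sum_filter, add_comm]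
    symm
    apply Finset.sum_Ioc_consecutive
    · omega
    · exact Nat.floor_le_floor (by linarith)
  have h1 : ∑ p ∈ s, Real.log p ≤ s.card * (2 * Real.log t) := by
    rw [← nsmul_eq_mul]
    apply Finset.sum_le_card_nsmul
    intro p hp
    have := Real.log_le_log (hle p hp).2 ((hle p hp).1.trans (by nlinarith : 4 * t ≤ t ^ 2))
    rw [Real.log_pow] at this
    exact_mod_cast this
  have h2 : s.card * (1 / (4 * t) ^ 2) ≤ ∑ p ∈ s, 1 / (p:ℝ) ^ 2 := by
    rw [← nsmul_eq_mul]
    apply Finset.card_nsmul_le_sum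
    intro p hp
    have := hle p hp
    have := this.2
    gcongr
    exact (hle p hp).1
  have h3 := theta_gap ht
  rw [hgap] at h3
  refine le_trans ?_ h2
  rw [div_le_iff₀ (by positivity)]
  have h4 : t / 2 ≤ s.card * (2 * Real.log t) := h3.trans h1
  have : (s.card:ℝ) * (1 / (4 * t) ^ 2) * (64 * (t * Real.log t))
      = (s.card * (2 * Real.log t)) * (2 / t) := by
    field_simp; ring
  rw [this]
  calc (1:ℝ) = t / 2 * (2 / t) := by field_simp
    _ ≤ _ := by gcongr

/-- The success probability bound. -/
noncomputable def qq (t : ℝ) : ℝ := 1 / (1024 * (t * Real.log t))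

lemma finite_mu {θ : ℝ} (hθ : θ ∈ Icc (0:ℝ) 1) : IsFiniteMeasure (mu θ) :=
  ⟨lt_of_le_of_lt (mu_le_one hθ _) ENNReal.one_lt_top⟩

lemma measurable_cfA' (k : ℕ) : Measurable (fun x => (cfA' x k : ℝ)) := by
  have : (fun x => (cfA' x k : ℝ))
      = (fun n : ℕ => ((if n.Prime then n else 0 : ℕ) : ℝ)) ∘ (fun x => cfA x k) := rfl
  rw [this]
  exact (measurable_from_top).comp (measurable_cfA k)

lemma success {θ t : ℝ} (hθ : θ ∈ Icc (0:ℝ) 1) (ht : 160000 ≤ t) :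
    ENNReal.ofReal (qq t) ≤ mu θ {x | t ≤ (cfA' x 1 : ℝ)} := by
  obtain ⟨s, hs, hsum⟩ := prime_sum ht
  have hθ0 := hθ.1
  have hm : MeasurableSet {x | t ≤ (cfA' x 1 : ℝ)} := measurableSet_le measurable_const (measurable_cfA' 1)
  rw [mu_decomp hθ.1 hm]
  have hinj : Set.InjOn Nat.pred (s : Set ℕ) := by
    intro a ha b hb h
    have h1 := (hs a ha).1.pos
    have h2 := (hs b hb).1.pos
    simp only [Nat.pred_eq_sub_one] at h
    omega
  refine le_trans ?_ (ENNReal.sum_le_tsum (s.image Nat.pred))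
  rw [Finset.sum_image hinj]
  have hterm : ∀ p ∈ s, ENNReal.ofReal (1 / 16 * (1 / (p:ℝ) ^ 2)) ≤
      ENNReal.ofReal (1 / (((p.pred : ℕ):ℝ) + 1 + θ) ^ 2) *
      mu (1 / (((p.pred : ℕ):ℝ) + 1 + θ)) (br p.pred ⁻¹' {x | t ≤ (cfA' x 1 : ℝ)}) := by
    intro p hp
    obtain ⟨hpp, hpt⟩ := hs p hp
    have hp1 : p.pred + 1 = p := Nat.succ_pred_eq_of_pos hpp.pos
    have huniv : mu (1 / (((p.pred : ℕ):ℝ) + 1 + θ)) (br p.pred ⁻¹' {x | t ≤ (cfA' x 1 : ℝ)})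
        = mu (1 / (((p.pred : ℕ):ℝ) + 1 + θ)) univ := by
      apply mu_congr
      intro y hy
      simp only [mem_preimage, mem_ofPred_eq, mem_univ, iff_true]
      unfold cfA'
      rw [cfA_br_one _ hy, hp1, if_pos hpp]
      exact hpt
    rw [huniv]
    refine le_trans ?_ (mul_le_mul_right (mu_univ_ge (theta_mem p.pred hθ)) _)
    rw [← ENNReal.ofReal_mul (by positivity)]
    apply ENNReal.ofReal_le_ofReal
    have hc : (((p.pred : ℕ):ℝ) + 1) = p := by exact_mod_cast hp1
    rw [hc]
    have hp0 : (1:ℝ) ≤ p := by exact_mod_cast hpp.pos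
    have : 1 / (2 * (p:ℝ)) ^ 2 ≤ 1 / ((p:ℝ) + θ) ^ 2 := by
      gcongr
      linarith [hθ.2]
    calc 1 / 16 * (1 / (p:ℝ) ^ 2) = 1 / (2 * (p:ℝ)) ^ 2 * (1 / 4) := by field_simp; ring
      _ ≤ _ := by gcongr
  refine le_trans ?_ (Finset.sum_le_sum hterm)
  rw [← ENNReal.ofReal_sum_of_nonneg (fun p _ => by positivity)]
  apply ENNReal.ofReal_le_ofReal
  rw [← Finset.mul_sum]
  calc qq t = 1 / 16 * (1 / (64 * (t * Real.log t))) := by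
        unfold qq
        rw [div_mul_div_comm]; ring_nf
    _ ≤ _ := by gcongr

lemma past_future_real {B : Set ℝ} (hB : MeasurableSet B) {r : ℝ} (hr0 : 0 ≤ r)
    (hr : ∀ θ ∈ Icc (0:ℝ) 1, (mu θ).real B ≤ r * (mu θ).real univ) {m : ℕ}
    {A : Set ℝ} (hA : Past m A) {θ : ℝ} (hθ : θ ∈ Icc (0:ℝ) 1) :
      (mu θ).real (A ∩ gaussMap^[m] ⁻¹' B) ≤ r * (mu θ).real A := by
  have key := past_future hB (r := ENNReal.ofReal r) (fun θ hθ => by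
    have := finite_mu hθ
    have := ENNReal.ofReal_le_ofReal (hr θ hθ)
    rwa [ENNReal.ofReal_mul hr0, ofReal_measureReal, ofReal_measureReal] at this) m hA θ hθ
  have := finite_mu hθ
  have := ENNReal.toReal_mono (by finiteness) key
  rwa [ENNReal.toReal_mul, ENNReal.toReal_ofReal hr0] at this

/-- Strong version of `Past`. -/
def SPast (m : ℕ) (A : Set ℝ) : Prop :=
  MeasurableSet A ∧ ∀ x y : ℝ, (∀ k, 1 ≤ k → k ≤ m → cfA x k = cfA y k) → x ∈ A → y ∈ A

lemma SPast.past {m : ℕ} {A : Set ℝ} (h : SPast m A) : Past m A :=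
  ⟨h.1, fun x _ y _ hxy => h.2 x y hxy⟩

lemma SPast.mono {m n : ℕ} {A : Set ℝ} (h : SPast m A) (hmn : m ≤ n) : SPast n A :=
  ⟨h.1, fun x y hxy => h.2 x y fun k h1 h2 => hxy k h1 (h2.trans hmn)⟩

lemma SPast.inter {m : ℕ} {A B : Set ℝ} (h : SPast m A) (h' : SPast m B) : SPast m (A ∩ B) :=
  ⟨h.1.inter h'.1, fun x y hxy hx => ⟨h.2 x y hxy hx.1, h'.2 x y hxy hx.2⟩⟩

lemma SPast.compl {m : ℕ} {A : Set ℝ} (h : SPast m A) : SPast m Aᶜ :=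
  ⟨h.1.compl, fun x y hxy hx hy => hx (h.2 y x (fun k h1 h2 => (hxy k h1 h2).symm) hy)⟩

lemma SPast.shift {m : ℕ} {A : Set ℝ} (h : SPast m A) (n : ℕ) :
    SPast (m + n) (gaussMap^[n] ⁻¹' A) := by
  refine ⟨measurable_gauss_iter n h.1, fun x y hxy hx => h.2 _ _ (fun k h1 h2 => ?_) hx⟩
  rw [← cfA_succ _ _ _ h1, ← cfA_succ _ _ _ h1]
  exact hxy _ (by omega) (by omega)

/-- No large prime digit among the first `M`. -/
def NoS (M : ℕ) (t : ℝ) : Set ℝ := {x | ∀ k, 1 ≤ k → k ≤ M → ¬ t ≤ (cfA' x k : ℝ)}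

lemma NoS_past (M : ℕ) (t : ℝ) : SPast M (NoS M t) := by
  constructor
  · have : NoS M t = ⋂ k, ⋂ (_ : 1 ≤ k), ⋂ (_ : k ≤ M), {x | t ≤ (cfA' x k : ℝ)}ᶜ := by
      ext x; simp [NoS]
    rw [this]
    refine MeasurableSet.iInter fun k => MeasurableSet.iInter fun _ => MeasurableSet.iInter fun _ =>
      (measurableSet_le measurable_const (measurable_cfA' k)).compl
  · intro x y hxy hx k h1 h2
    have := hx k h1 h2
    unfold cfA' at this ⊢
    rwa [← hxy k h1 h2]

lemma NoS_succ (M : ℕ) (t : ℝ) : NoS (M + 1) t = NoS M t ∩ gaussMap^[M] ⁻¹' (NoS 1 t) := by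
  ext x
  simp only [NoS, mem_ofPred_eq, mem_inter_iff, mem_preimage]
  have e : cfA' (gaussMap^[M] x) 1 = cfA' x (M + 1) := by
    unfold cfA'
    rw [← cfA_succ _ _ _ le_rfl, add_comm]
  constructor
  · intro h
    refine ⟨fun k h1 h2 => h k h1 (by omega), fun k h1 h2 => ?_⟩
    obtain rfl : k = 1 := by omega
    rw [e]
    exact h _ (by omega) le_rfl
  · rintro ⟨h, h'⟩ k h1 h2
    rcases Nat.lt_or_ge M k with hk | hk
    · obtain rfl : k = M + 1 := by omega
      rw [← e]; exact h' 1 le_rfl le_rfl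
    · exact h k h1 hk

lemma qq_nonneg {t : ℝ} (ht : 160000 ≤ t) : 0 ≤ qq t := by
  have : 0 < Real.log t := Real.log_pos (by linarith)
  unfold qq
  positivity

lemma qq_le_one {t : ℝ} (ht : 160000 ≤ t) : qq t ≤ 1 := by
  have h := (success (θ := 0) (by simp) ht).trans (mu_le_one (by simp) _)
  simpa using h

lemma NoS_one {θ t : ℝ} (hθ : θ ∈ Icc (0:ℝ) 1) (ht : 160000 ≤ t) :
    (mu θ).real (NoS 1 t) ≤ (1 - qq t) * (mu θ).real univ := by
  have := finite_mu hθ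
  have h1 : (NoS 1 t) = {x | t ≤ (cfA' x 1 : ℝ)}ᶜ := by
    ext x
    simp only [NoS, mem_ofPred_eq, mem_compl_iff]
    exact ⟨fun h => h 1 le_rfl le_rfl, fun h k h1 h2 => by
      obtain rfl : k = 1 := by omega
      exact h⟩
  have hm : MeasurableSet {x | t ≤ (cfA' x 1 : ℝ)} := measurableSet_le measurable_const (measurable_cfA' 1)
  rw [h1, measureReal_compl hm]
  have h2 : qq t ≤ (mu θ).real {x | t ≤ (cfA' x 1 : ℝ)} := by
    have := ENNReal.toReal_mono (by finiteness) (success hθ ht)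
    rwa [ENNReal.toReal_ofReal (qq_nonneg ht)] at this
  have h3 : (mu θ).real univ ≤ 1 := by
    have := ENNReal.toReal_mono (by finiteness) (mu_le_one hθ univ)
    rwa [ENNReal.toReal_one] at this
  nlinarith [qq_nonneg ht]

lemma NoS_le {t : ℝ} (ht : 160000 ≤ t) (M : ℕ) : ∀ θ ∈ Icc (0:ℝ) 1,
    (mu θ).real (NoS M t) ≤ (1 - qq t) ^ M * (mu θ).real univ := by
  intro θ hθ
  have := finite_mu hθ
  induction M with
  | zero => 
    simp only [pow_zero, one_mul]
    exact measureReal_mono (subset_univ _)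
  | succ M ih =>
    rw [NoS_succ, pow_succ']
    have h0 : 0 ≤ 1 - qq t := by linarith [qq_le_one ht]
    refine (past_future_real (NoS_past 1 t).1 h0 (fun θ hθ => NoS_one hθ ht)
      (NoS_past M t).past hθ).trans ?_
    rw [mul_assoc]
    gcongr

/-- Failure of a double block. -/
def Bad (M : ℕ) (t : ℝ) : Set ℝ := ((NoS M t)ᶜ ∩ gaussMap^[M] ⁻¹' (NoS M t)ᶜ)ᶜ

lemma Bad_past (M : ℕ) (t : ℝ) : SPast (M + M) (Bad M t) :=
  (((NoS_past M t).compl.mono (by omega)).inter ((NoS_past M t).compl.shift M)).compl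

/-- Lower bound for success in a half block. -/
noncomputable def ss (M : ℕ) (t : ℝ) : ℝ := M * qq t / (1 + M * qq t)

lemma ss_nonneg {t : ℝ} (ht : 160000 ≤ t) (M : ℕ) : 0 ≤ ss M t := by
  have := qq_nonneg ht
  unfold ss; positivity

lemma ss_le_one {t : ℝ} (ht : 160000 ≤ t) (M : ℕ) : ss M t ≤ 1 := by
  have := qq_nonneg ht
  unfold ss
  rw [div_le_one (by positivity)]
  linarith

lemma pow_le_ss {t : ℝ} (ht : 160000 ≤ t) (M : ℕ) : (1 - qq t) ^ M ≤ 1 - ss M t := by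
  have h0 := qq_nonneg ht
  have h1 := qq_le_one ht
  have h2 : 1 - ss M t = 1 / (1 + M * qq t) := by
    unfold ss; field_simp; ring
  rw [h2, le_div_iff₀ (by positivity)]
  have h3 := one_add_mul_le_pow (a := qq t) (by linarith) M
  calc (1 - qq t) ^ M * (1 + M * qq t) ≤ (1 - qq t) ^ M * (1 + qq t) ^ M := by
        gcongr
    _ = (1 - qq t ^ 2) ^ M := by rw [← mul_pow]; ring_nf
    _ ≤ 1 := pow_le_one₀ (by nlinarith) (by nlinarith)

lemma Bad_le {t : ℝ} (ht : 160000 ≤ t) (M : ℕ) : ∀ θ ∈ Icc (0:ℝ) 1,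
    (mu θ).real (Bad M t) ≤ (1 - ss M t ^ 2) * (mu θ).real univ := by
  intro θ hθ
  have := finite_mu hθ
  have hs0 := ss_nonneg ht M
  have hs1 := ss_le_one ht M
  have hN : ∀ θ ∈ Icc (0:ℝ) 1, (mu θ).real (NoS M t) ≤ (1 - ss M t) * (mu θ).real univ := by
    intro θ hθ
    refine (NoS_le ht M θ hθ).trans ?_
    gcongr
    exact pow_le_ss ht M
  have hB : Bad M t ⊆ NoS M t ∪ ((NoS M t)ᶜ ∩ gaussMap^[M] ⁻¹' (NoS M t)) := by
    intro x hx
    simp only [Bad, mem_compl_iff, mem_inter_iff, mem_preimage, mem_union] at hx ⊢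
    tauto
  have h1 := (measureReal_mono (μ := mu θ) hB).trans (measureReal_union_le _ _)
  have h2 := past_future_real (NoS_past M t).1 (by linarith) hN (NoS_past M t).compl.past hθ
  rw [measureReal_compl (NoS_past M t).1] at h2
  have h3 := hN θ hθ
  nlinarith [mul_le_mul_of_nonneg_left h3 hs0]

/-- Condensation. -/
lemma condense (f : ℕ → ℝ) (hf0 : ∀ n, 0 ≤ f n) (J : ℕ)
    (hanti : ∀ m n, 2 ^ J ≤ m → m ≤ n → f n ≤ f m)
    (hdiv : ¬ Summable fun n : ℕ => (n : ℝ) * f n) :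
    ¬ Summable fun j : ℕ => (4:ℝ) ^ j * f (2 ^ j) := by
  intro hs
  apply hdiv
  have hblock : ∀ K : ℕ, J ≤ K → ∑ n ∈ Finset.Ico ((2:ℕ) ^ J) (2 ^ K), (n:ℝ) * f n ≤
      ∑ j ∈ Finset.Ico J K, 2 * ((4:ℝ) ^ j * f (2 ^ j)) := by
    intro K hK
    induction K, hK using Nat.le_induction with
    | base => simp
    | succ K hK ih =>
      rw [Finset.sum_Ico_succ_top hK, ← Finset.sum_Ico_consecutive _
        (Nat.pow_le_pow_right (by norm_num) hK : 2 ^ J ≤ 2 ^ K)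
        (Nat.pow_le_pow_right (by norm_num) (by omega) : 2 ^ K ≤ 2 ^ (K + 1))]
      gcongr
      have : ∀ n ∈ Finset.Ico ((2:ℕ) ^ K) (2 ^ (K + 1)), (n:ℝ) * f n ≤ 2 ^ (K + 1) * f (2 ^ K) := by
        intro n hn
        rw [Finset.mem_Ico] at hn
        have h1 : (n:ℝ) ≤ 2 ^ (K + 1) := by exact_mod_cast hn.2.le
        have h2 := hanti (2 ^ K) n (Nat.pow_le_pow_right (by norm_num) hK) hn.1
        exact mul_le_mul h1 h2 (hf0 n) (by positivity)
      refine (Finset.sum_le_card_nsmul _ _ _ this).trans (le_of_eq ?_)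
      rw [Nat.card_Ico, nsmul_eq_mul, pow_succ, mul_two, Nat.add_sub_cancel]
      push_cast
      rw [show (4:ℝ) = 2 * 2 by norm_num, mul_pow]
      ring
  rw [← summable_nat_add_iff (2 ^ J)]
  refine summable_of_sum_range_le (c := ∑' j, 2 * ((4:ℝ) ^ j * f (2 ^ j)))
    (fun n => mul_nonneg (by positivity) (hf0 _)) (fun n => ?_)
  have h1 : ∑ i ∈ Finset.range n, ((i + 2 ^ J : ℕ):ℝ) * f (i + 2 ^ J)
      = ∑ i ∈ Finset.Ico ((2:ℕ) ^ J) (n + 2 ^ J), (i:ℝ) * f i := by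
    rw [Finset.range_eq_Ico]
    have := Finset.sum_Ico_add' (fun i : ℕ => (i:ℝ) * f i) 0 n (2 ^ J)
    rw [zero_add] at this
    exact this
  rw [h1]
  have hle : n + 2 ^ J ≤ 2 ^ (n + J) := by
    have h3 : n < 2 ^ n := Nat.lt_two_pow_self
    have h2 : 1 ≤ 2 ^ J := Nat.one_le_two_pow
    rw [pow_add]
    nlinarith
  calc _ ≤ ∑ i ∈ Finset.Ico ((2:ℕ) ^ J) (2 ^ (n + J)), (i:ℝ) * f i := by
        apply Finset.sum_le_sum_of_subset_of_nonneg
        · exact Finset.Ico_subset_Ico le_rfl hle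
        · intro i _ _; exact mul_nonneg (by positivity) (hf0 _)
    _ ≤ _ := hblock _ (by omega)
    _ ≤ _ := (hs.mul_left 2).sum_le_tsum _ (fun i _ => by have := hf0 (2 ^ i); positivity)

lemma not_summable_ratio (y : ℕ → ℝ) (hy : ∀ n, 0 ≤ y n) (h : ¬ Summable fun n => y n ^ 2) :
    ¬ Summable fun n => (y n / (1 + y n)) ^ 2 := by
  intro hs
  apply h
  have h0 := hs.tendsto_atTop_zero
  have h1 : ∀ᶠ n in atTop, (y n / (1 + y n)) ^ 2 < 1 / 4 := h0.eventually_lt_const (by norm_num)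
  refine Summable.of_norm_bounded_eventually_nat (g := fun n => 4 * (y n / (1 + y n)) ^ 2)
    (hs.mul_left 4) ?_
  filter_upwards [h1] with n hn
  have hyn := hy n
  have h2 : y n / (1 + y n) < 1 / 2 := by
    apply lt_of_pow_lt_pow_left₀ 2 (by norm_num)
    linarith
  rw [div_lt_iff₀ (by positivity)] at h2
  have h3 : y n ≤ 2 * (y n / (1 + y n)) := by
    rw [mul_div_assoc', le_div_iff₀ (by positivity)]
    nlinarith
  rw [Real.norm_of_nonneg (by positivity)]
  calc y n ^ 2 ≤ (2 * (y n / (1 + y n))) ^ 2 := by gcongr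
    _ = _ := by ring

lemma prod_zero (s : ℕ → ℝ) (h0 : ∀ n, 0 ≤ s n) (h1 : ∀ n, s n ≤ 1)
    (h : ¬ Summable s) : Tendsto (fun J => ∏ j ∈ Finset.range J, (1 - s j)) atTop (nhds 0) := by
  have ht := (not_summable_iff_tendsto_nat_atTop_of_nonneg h0).1 h
  have he : Tendsto (fun J => Real.exp (-∑ j ∈ Finset.range J, s j)) atTop (nhds 0) :=
    Real.tendsto_exp_neg_atTop_nhds_zero.comp ht
  refine squeeze_zero (fun J => Finset.prod_nonneg fun j _ => by linarith [h1 j]) (fun J => ?_) he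
  rw [← Finset.sum_neg_distrib, Real.exp_sum]
  refine Finset.prod_le_prod (fun j _ => by linarith [h1 j]) (fun j _ => ?_)
  have := Real.add_one_le_exp (-s j)
  linarith

/-- No success in the blocks `j0, …, j0+J-1`. -/
def CC (t : ℕ → ℝ) (j0 J : ℕ) : Set ℝ :=
  {x | ∀ i, i < J → gaussMap^[2 ^ (j0 + i + 1)] x ∈ Bad (2 ^ (j0 + i)) (t (j0 + i))}

lemma CC_succ (t : ℕ → ℝ) (j0 J : ℕ) : CC t j0 (J + 1) = CC t j0 J ∩
    gaussMap^[2 ^ (j0 + J + 1)] ⁻¹' (Bad (2 ^ (j0 + J)) (t (j0 + J))) := by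
  ext x
  simp only [CC, mem_ofPred_eq, mem_inter_iff, mem_preimage]
  constructor
  · intro h
    exact ⟨fun i hi => h i (by omega), h J (by omega)⟩
  · rintro ⟨h, h'⟩ i hi
    rcases Nat.lt_succ_iff_lt_or_eq.1 hi with h1 | rfl
    · exact h i h1
    · exact h'

lemma CC_past (t : ℕ → ℝ) (j0 J : ℕ) : SPast (2 ^ (j0 + J + 1)) (CC t j0 J) := by
  induction J with
  | zero =>
    have : CC t j0 0 = univ := by ext x; simp [CC]
    rw [this]
    exact ⟨MeasurableSet.univ, fun _ _ _ _ => trivial⟩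
  | succ J ih =>
    rw [CC_succ]
    refine (ih.mono (Nat.pow_le_pow_right (by norm_num) (by omega))).inter
      (((Bad_past _ _).shift _).mono (le_of_eq ?_))
    rw [← add_assoc j0 J 1]
    ring

lemma CC_le (t : ℕ → ℝ) (j0 : ℕ) (ht : ∀ j, j0 ≤ j → 160000 ≤ t j) (J : ℕ) :
    (mu 0).real (CC t j0 J) ≤ ∏ i ∈ Finset.range J, (1 - ss (2 ^ (j0 + i)) (t (j0 + i)) ^ 2) := by
  have h0 : (0:ℝ) ∈ Icc (0:ℝ) 1 := by simp
  have := finite_mu h0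
  induction J with
  | zero =>
    simp only [Finset.range_zero, Finset.prod_empty]
    have := ENNReal.toReal_mono (by finiteness) (mu_le_one h0 (CC t j0 0))
    rwa [ENNReal.toReal_one] at this
  | succ J ih =>
    rw [CC_succ, Finset.prod_range_succ, mul_comm]
    have htJ := ht (j0 + J) (by omega)
    have hs0 := ss_nonneg htJ (2 ^ (j0 + J))
    have hs1 := ss_le_one htJ (2 ^ (j0 + J))
    have hr : 0 ≤ 1 - ss (2 ^ (j0 + J)) (t (j0 + J)) ^ 2 := by nlinarith
    refine (past_future_real (Bad_past _ _).1 hr (Bad_le htJ _) (CC_past t j0 J).past h0).trans ?_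
    gcongr

lemma good_blocks (t : ℕ → ℝ) (j0 : ℕ) (ht : ∀ j, j0 ≤ j → 160000 ≤ t j)
    (hdiv : ¬ Summable fun j : ℕ => (((2 ^ j : ℕ) : ℝ) * qq (t j)) ^ 2) :
    ∀ᵐ x ∂(mu 0), ∃ j, j0 ≤ j ∧ gaussMap^[2 ^ (j + 1)] x ∉ Bad (2 ^ j) (t j) := by
  have h0 : (0:ℝ) ∈ Icc (0:ℝ) 1 := by simp
  have := finite_mu h0
  have hd2 : ¬ Summable fun i : ℕ => ss (2 ^ (j0 + i)) (t (j0 + i)) ^ 2 := by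
    unfold ss
    refine not_summable_ratio (fun i => ((2 ^ (j0 + i) : ℕ) : ℝ) * qq (t (j0 + i)))
      (fun i => mul_nonneg (by positivity) (qq_nonneg (ht _ (by omega)))) ?_
    intro hs
    apply hdiv
    rw [← summable_nat_add_iff j0]
    simpa only [add_comm] using hs
  have hp := prod_zero _ (fun i => sq_nonneg _)
    (fun i => by
      have hs0 := ss_nonneg (ht (j0 + i) (by omega)) (2 ^ (j0 + i))
      have hs1 := ss_le_one (ht (j0 + i) (by omega)) (2 ^ (j0 + i))
      nlinarith) hd2
  have hz : (mu 0).real (⋂ J, CC t j0 J) = 0 := by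
    apply le_antisymm _ measureReal_nonneg
    apply ge_of_tendsto' hp
    intro J
    exact (measureReal_mono (iInter_subset _ J)).trans (CC_le t j0 ht J)
  rw [measureReal_eq_zero_iff] at hz
  rw [ae_iff]
  refine measure_mono_null ?_ hz
  intro x hx
  simp only [mem_ofPred_eq, not_exists, not_and, not_not] at hx
  refine mem_iInter.2 fun J i _ => hx (j0 + i) (by omega)

lemma not_bad {x : ℝ} {j : ℕ} {t : ℝ} (h : gaussMap^[2 ^ (j + 1)] x ∉ Bad (2 ^ j) t) :
    ∃ k l : ℕ, 1 ≤ k ∧ k ≤ 2 ^ (j + 2) ∧ 1 ≤ l ∧ l ≤ 2 ^ (j + 2) ∧ k ≠ l ∧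
      t ≤ (cfA' x k : ℝ) ∧ t ≤ (cfA' x l : ℝ) := by
  simp only [Bad, mem_compl_iff, not_not, mem_inter_iff, mem_preimage, NoS, mem_ofPred_eq,
    not_forall] at h
  obtain ⟨⟨k, hk1, hk2, hk⟩, l, hl1, hl2, hl⟩ := h
  rw [← Function.iterate_add_apply] at hl
  unfold cfA' at hk hl
  rw [← cfA_succ _ _ _ hk1] at hk
  rw [← cfA_succ _ _ _ hl1] at hl
  have e1 : 2 ^ (j + 1) = 2 * 2 ^ j := by ring
  have e2 : 2 ^ (j + 2) = 4 * 2 ^ j := by ring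
  refine ⟨k + 2 ^ (j + 1), l + (2 ^ j + 2 ^ (j + 1)), by omega, by omega, by omega, by omega,
    by omega, hk, hl⟩

end CFProof

/-- divergence part of the zero–one law: if φ is non-decreasing with
`φ(n) → ∞` and `Σ n/(φ(n)² log²φ(n)) = ∞`, then `E'(φ)` has full Lebesgue measure 1. -/
theorem Eset_measure_one (φ : ℕ → ℝ) (hpos : ∀ n, 0 < φ n) (hmono : Monotone φ)
    (htend : Tendsto φ atTop atTop)
    (hdiv : ¬ Summable fun n : ℕ => (n : ℝ) / (φ n ^ 2 * Real.log (φ n) ^ 2)) :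
    volume (Eset φ) = 1 := by
  classical
  obtain ⟨N, hN⟩ := eventually_atTop.1 (htend.eventually_ge_atTop 160000)
  have hf0 : ∀ n, 0 ≤ 1 / (φ n ^ 2 * Real.log (φ n) ^ 2) := fun n => by positivity
  have hcond := CFProof.condense (fun n => 1 / (φ n ^ 2 * Real.log (φ n) ^ 2)) hf0 N
    (fun m n hm hmn => by
      have h1 : N ≤ m := (Nat.lt_two_pow_self.le).trans hm
      have h2 := hN m h1
      have h3 := hmono hmn
      have h4 : 0 < Real.log (φ m) := Real.log_pos (by linarith)
      have h5 : Real.log (φ m) ≤ Real.log (φ n) := Real.log_le_log (by linarith) h3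
      have h6 := hpos m
      gcongr)
    (by simpa only [mul_one_div] using hdiv)
  have hdiv2 : ¬ Summable fun j : ℕ =>
      (((2 ^ j : ℕ) : ℝ) * CFProof.qq (φ (2 ^ (j + 2)))) ^ 2 := by
    intro hs
    apply hcond
    rw [← summable_nat_add_iff 2]
    refine (hs.mul_left (16 * 1024 ^ 2)).congr fun j => ?_
    unfold CFProof.qq
    push_cast
    rw [pow_add (4:ℝ), show (4:ℝ) ^ j = (2 ^ j) ^ 2 by rw [← pow_mul, mul_comm, pow_mul]; norm_num]
    rw [one_div, one_div, mul_inv, mul_inv, mul_inv]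
    ring
  have hae : ∀ᵐ x ∂(CFProof.mu 0), x ∈ Eset φ := by
    have hall : ∀ᵐ x ∂(CFProof.mu 0), ∀ i : ℕ, ∃ j, N + i ≤ j ∧
        gaussMap^[2 ^ (j + 1)] x ∉ CFProof.Bad (2 ^ j) (φ (2 ^ (j + 2))) := by
      rw [ae_all_iff]
      intro i
      refine CFProof.good_blocks (fun j => φ (2 ^ (j + 2))) (N + i) (fun j hj => hN _ ?_) hdiv2
      have : j + 2 < 2 ^ (j + 2) := Nat.lt_two_pow_self
      omega
    have hIoo : ∀ᵐ x ∂(CFProof.mu 0), x ∈ Ioo (0:ℝ) 1 := by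
      rw [ae_iff]; exact CFProof.mu_compl 0
    filter_upwards [hall, hIoo] with x hx hx1
    refine ⟨⟨hx1.1.le, hx1.2⟩, Set.infinite_of_forall_exists_gt fun i => ?_⟩
    obtain ⟨j, hj, hb⟩ := hx i
    refine ⟨2 ^ (j + 2), CFProof.not_bad hb, ?_⟩
    have : j + 2 < 2 ^ (j + 2) := Nat.lt_two_pow_self
    omega
  rw [CFProof.mu_zero] at hae
  apply le_antisymm
  · calc volume (Eset φ) ≤ volume (Ico (0:ℝ) 1) := measure_mono fun x hx => hx.1
      _ = 1 := by simp
  · calc (1:ENNReal) = volume (Ioo (0:ℝ) 1) := by simp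
      _ ≤ volume (Eset φ) := by
        apply measure_mono_ae
        exact (ae_restrict_iff' measurableSet_Ioo).1 hae
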